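/- Suppose ν has a finite absolute first moment and that ν is pure and centered at m. Then for μ-almost every realization h, for every k ≥ 1, every α with 1 − 1/(2(2k−1)) < α < 1, and every a > 0: (1/n^{1−2k(1−α)}) ln ∫_{ {s : |s| > a n^{1−α}} } exp( −n ( G_n^h(m + s n^{α−1}) − G_n^h(m) ) ) ds → −∞ as n → ∞. -/

import Mathlib

open MeasureTheory ProbabilityTheory Real Filter Topology
open scoped ENNReal NNReal

noncomputable section

/-- The value of a spin encoded as a Boolean. -/
def spin (b : Bool) : ℝ := if b then 1 else -1

/-- Total magnetization of a configuration. -/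
def mag {n : ℕ} (σ : Fin n → Bool) : ℝ := ∑ i, spin (σ i)

/-- Gibbs weight of a configuration in the random field Curie-Weiss model. -/
def gibbsWeight (β : ℝ) (h : ℕ → ℝ) (n : ℕ) (σ : Fin n → Bool) : ℝ :=
  Real.exp (β / (2 * n) * (mag σ) ^ 2 + β * ∑ i : Fin n, h i * spin (σ i))

/-- The random field Curie-Weiss Gibbs measure on configurations. -/
def gibbsMeasure (β : ℝ) (h : ℕ → ℝ) (n : ℕ) : Measure (Fin n → Bool) :=
  (ENNReal.ofReal (∑ σ : Fin n → Bool, gibbsWeight β h n σ))⁻¹ •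
    ∑ σ : Fin n → Bool, ENNReal.ofReal (gibbsWeight β h n σ) • Measure.dirac σ

/-- `μ` is the infinite product of `ν` over `ℕ` (characterised by finite marginals). -/
def IsProductMeasure (ν : Measure ℝ) (μ : Measure (ℕ → ℝ)) : Prop :=
  ∀ n : ℕ, μ.map (fun h (i : Fin n) => h (i : ℕ)) = Measure.pi fun _ : Fin n => ν

/-- extended logarithm, `elog 0 = ⊥`, `elog ⊤ = ⊤`. -/
def elog (x : ℝ≥0∞) : EReal :=
  if x = 0 then ⊥ else if x = ⊤ then ⊤ else ((Real.log x.toReal : ℝ) : EReal)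

/-- A sequence of measures satisfies a large deviations principle with given speed and
rate function. -/
def HasLDP (P : ℕ → Measure ℝ) (speed : ℕ → ℝ) (I : ℝ → ℝ≥0∞) : Prop :=
  LowerSemicontinuous I ∧ (∀ c : ℝ, IsCompact {x : ℝ | I x ≤ ENNReal.ofReal c}) ∧
    ∀ C : Set ℝ, MeasurableSet C →
      -(⨅ x ∈ interior C, (I x : EReal)) ≤
          liminf (fun n => ((((speed n)⁻¹ : ℝ) : EReal)) * elog (P n C)) atTop ∧
        limsup (fun n => ((((speed n)⁻¹ : ℝ) : EReal)) * elog (P n C)) atTop ≤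
          -(⨅ x ∈ closure C, (I x : EReal))

/-- The function `G` of the random field Curie-Weiss model. -/
def G (β : ℝ) (ν : Measure ℝ) (x : ℝ) : ℝ :=
  β / 2 * x ^ 2 - ∫ h, Real.log (Real.cosh (β * (x + h))) ∂ν

/-- The finite-volume function `G_n^h`. -/
def Gn (β : ℝ) (h : ℕ → ℝ) (n : ℕ) (x : ℝ) : ℝ :=
  β / 2 * x ^ 2 - (1 / n) * ∑ i : Fin n, Real.log (Real.cosh (β * (x + h i)))

/-- `m` is a (local or global) minimum of `G` of type `k` and strength `l`. -/
def IsMinOfType (β : ℝ) (ν : Measure ℝ) (m : ℝ) (k : ℕ) (l : ℝ) : Prop :=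
  1 ≤ k ∧ 0 < l ∧ (∀ i : ℕ, 1 ≤ i → i ≤ 2 * k - 1 → iteratedDeriv i (G β ν) m = 0) ∧
    iteratedDeriv (2 * k) (G β ν) m = l

/-- The height of a minimum `m` of `G`. -/
def height (β : ℝ) (ν : Measure ℝ) (m : ℝ) : ℝ := G β ν m - ⨅ w, G β ν w

/-- The broadness of a minimum `m` of `G`. -/
def broadness (β : ℝ) (ν : Measure ℝ) (m : ℝ) : ℝ :=
  sInf ((fun y => |y - m|) '' {y | G β ν y < G β ν m})

/-- The moderate deviations rate function. -/
def mdpRate (β l : ℝ) (k : ℕ) (x : ℝ) : ℝ≥0∞ :=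
  if k = 1 then ENNReal.ofReal (x ^ 2 / (2 * (l⁻¹ - β⁻¹)))
  else ENNReal.ofReal (l * x ^ (2 * k) / (Nat.factorial (2 * k)))

/-- The polynomial `P_{2k}`. -/
def P2k (l : ℝ) (k : ℕ) (s : ℝ) : ℝ :=
  l / (2 * (Nat.factorial (2 * k))) * s ^ (2 * k) - ∑ i ∈ Finset.Icc 1 (2 * k - 1), |s| ^ i


lemma aux_logcosh_lip (x y : ℝ) :
    |Real.log (Real.cosh x) - Real.log (Real.cosh y)| ≤ |x - y| := by
  have key : ∀ x y : ℝ, Real.log (Real.cosh x) ≤ |x - y| + Real.log (Real.cosh y) := by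
    intro x y
    rw [← Real.log_exp (|x - y|), ← Real.log_mul (Real.exp_pos _).ne' (Real.cosh_pos y).ne']
    apply Real.log_le_log (Real.cosh_pos x)
    rw [Real.cosh_eq, Real.cosh_eq]
    have h1 : Real.exp x ≤ Real.exp |x - y| * Real.exp y := by
      rw [← Real.exp_add]; apply Real.exp_le_exp.2; linarith [le_abs_self (x - y)]
    have h2 : Real.exp (-x) ≤ Real.exp |x - y| * Real.exp (-y) := by
      rw [← Real.exp_add]; apply Real.exp_le_exp.2; linarith [neg_abs_le (x - y)]
    linarith
  rw [abs_le]
  have h1 := key x y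
  have h2 := key y x
  rw [abs_sub_comm] at h2
  constructor <;> linarith

lemma aux_lip (β : ℝ) (hβ : 0 < β) (x y t : ℝ) :
    |Real.log (Real.cosh (β * (x + t))) - Real.log (Real.cosh (β * (y + t)))|
      ≤ β * |x - y| := by
  refine (aux_logcosh_lip _ _).trans (le_of_eq ?_)
  rw [show β * (x + t) - β * (y + t) = β * (x - y) by ring, abs_mul, abs_of_pos hβ]

def auxF (β : ℝ) (h : ℕ → ℝ) (n : ℕ) (x : ℝ) : ℝ :=
  (∑ i ∈ Finset.range n, Real.log (Real.cosh (β * (x + h i)))) / n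

lemma aux_Gn (β : ℝ) (h : ℕ → ℝ) (n : ℕ) (x : ℝ) :
    Gn β h n x = β / 2 * x ^ 2 - auxF β h n x := by
  unfold Gn auxF
  rw [Finset.sum_range]
  ring

lemma auxF_lip (β : ℝ) (hβ : 0 < β) (h : ℕ → ℝ) (n : ℕ) (x y : ℝ) :
    |auxF β h n x - auxF β h n y| ≤ β * |x - y| := by
  unfold auxF
  rcases Nat.eq_zero_or_pos n with rfl | hn
  · simp; positivity
  have hn' : (0 : ℝ) < n := by exact_mod_cast hn
  rw [← sub_div, abs_div, abs_of_pos hn', div_le_iff₀ hn', ← Finset.sum_sub_distrib]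
  refine (Finset.abs_sum_le_sum_abs _ _).trans ?_
  refine (Finset.sum_le_sum (fun i _ => aux_lip β hβ x y (h i))).trans (le_of_eq ?_)
  simp; ring

lemma aux_integrable (β : ℝ) (hβ : 0 < β) (ν : Measure ℝ) [IsProbabilityMeasure ν]
    (hmom : Integrable (fun x : ℝ => |x|) ν) (x : ℝ) :
    Integrable (fun t => Real.log (Real.cosh (β * (x + t)))) ν := by
  have hg : Integrable (fun t : ℝ => β * (|x| + |t|)) ν :=
    ((integrable_const _).add hmom).const_mul β
  refine hg.mono' ?_ (Eventually.of_forall fun t => ?_)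
  · have : Measurable (fun t : ℝ => Real.log (Real.cosh (β * (x + t)))) :=
      Real.measurable_log.comp (Real.continuous_cosh.measurable.comp (by fun_prop))
    exact this.aestronglyMeasurable
  · have := aux_logcosh_lip (β * (x + t)) 0
    simp only [Real.cosh_zero, Real.log_one, sub_zero, abs_mul, abs_of_pos hβ] at this
    rw [Real.norm_eq_abs]
    exact this.trans (mul_le_mul_of_nonneg_left (abs_add_le _ _) hβ.le)

lemma aux_eval_map {ν : Measure ℝ} [IsProbabilityMeasure ν]
    {μ : Measure (ℕ → ℝ)} (hμ : IsProductMeasure ν μ) (i : ℕ) :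
    μ.map (fun h => h i) = ν := by
  have h1 := hμ (i + 1)
  have h2 := (measurePreserving_eval (fun _ : Fin (i + 1) => ν) (Fin.last i)).map_eq
  rw [← h1, Measure.map_map (by fun_prop) (by fun_prop)] at h2
  exact h2

lemma aux_indep {ν : Measure ℝ} [IsProbabilityMeasure ν]
    {μ : Measure (ℕ → ℝ)} [IsProbabilityMeasure μ] (hμ : IsProductMeasure ν μ) {i j : ℕ}
    (hij : i ≠ j) :
    IndepFun (fun h : ℕ → ℝ => h i) (fun h => h j) μ := by
  set n := max i j + 1 with hn
  have hi : i < n := by omega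
  have hj : j < n := by omega
  have h1 := hμ n
  have h2 : iIndepFun (fun (i : Fin n) (ω : Fin n → ℝ) => ω i) (Measure.pi fun _ : Fin n => ν) :=
    iIndepFun_pi (X := fun _ => id) (fun _ => aemeasurable_id)
  have h3 := h2.indepFun (i := ⟨i, hi⟩) (j := ⟨j, hj⟩) (by simpa using hij)
  rw [indepFun_iff_map_prod_eq_prod_map_map (measurable_pi_apply _).aemeasurable
    (measurable_pi_apply _).aemeasurable] at h3 ⊢
  rw [← h1, Measure.map_map (by fun_prop) (by fun_prop),
    Measure.map_map (by fun_prop) (by fun_prop),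
    Measure.map_map (by fun_prop) (by fun_prop)] at h3
  exact h3

lemma aux_slln (β : ℝ) (hβ : 0 < β) (ν : Measure ℝ) [IsProbabilityMeasure ν]
    (hmom : Integrable (fun x : ℝ => |x|) ν)
    (μ : Measure (ℕ → ℝ)) [IsProbabilityMeasure μ] (hμ : IsProductMeasure ν μ) (x : ℝ) :
    ∀ᵐ h ∂μ, Tendsto (fun n => auxF β h n x) atTop
      (𝓝 (∫ t, Real.log (Real.cosh (β * (x + t))) ∂ν)) := by
  have hf : Measurable (fun t : ℝ => Real.log (Real.cosh (β * (x + t)))) :=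
    Real.measurable_log.comp (Real.continuous_cosh.measurable.comp (by fun_prop))
  have hid : ∀ i, IdentDistrib (fun h : ℕ → ℝ => h i) (fun h => h 0) μ μ := fun i =>
    ⟨(measurable_pi_apply _).aemeasurable, (measurable_pi_apply _).aemeasurable, by
      rw [aux_eval_map hμ, aux_eval_map hμ]⟩
  have hfint := aux_integrable β hβ ν hmom x
  have key := strong_law_ae_real (μ := μ)
    (fun i (h : ℕ → ℝ) => Real.log (Real.cosh (β * (x + h i)))) ?_ ?_ ?_
  · have e : μ[fun h : ℕ → ℝ => Real.log (Real.cosh (β * (x + h 0)))]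
        = ∫ t, Real.log (Real.cosh (β * (x + t))) ∂ν := by
      have := integral_map (μ := μ) (φ := fun h : ℕ → ℝ => h 0) (measurable_pi_apply _).aemeasurable
        (f := fun t : ℝ => Real.log (Real.cosh (β * (x + t)))) hf.aestronglyMeasurable
      rw [aux_eval_map hμ] at this
      exact this.symm
    rw [e] at key
    exact key
  · have := hfint
    rw [← aux_eval_map hμ 0] at this
    exact this.comp_measurable (by fun_prop)
  · intro i j hij
    exact (aux_indep hμ hij).comp hf hf
  · intro i
    exact (hid i).comp hf

lemma aux_ae (β : ℝ) (hβ : 0 < β) (ν : Measure ℝ) [IsProbabilityMeasure ν]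
    (hmom : Integrable (fun x : ℝ => |x|) ν)
    (μ : Measure (ℕ → ℝ)) [IsProbabilityMeasure μ] (hμ : IsProductMeasure ν μ) :
    ∀ᵐ h ∂μ, ∀ x : ℝ, Tendsto (fun n => Gn β h n x) atTop (𝓝 (G β ν x)) := by
  have h0 : ∀ᵐ h ∂μ, ∀ q : ℚ, Tendsto (fun n => auxF β h n q) atTop
      (𝓝 (∫ t, Real.log (Real.cosh (β * (q + t))) ∂ν)) :=
    ae_all_iff.2 fun q => aux_slln β hβ ν hmom μ hμ q
  filter_upwards [h0] with h hh x
  simp only [aux_Gn, G]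
  refine tendsto_const_nhds.sub ?_
  rw [Metric.tendsto_atTop]
  intro ε hε
  obtain ⟨q, hq1, hq2⟩ := exists_rat_btwn (show x < x + ε / (3 * β) by
    have : 0 < ε / (3 * β) := by positivity
    linarith)
  have hxq : β * |x - q| < ε / 3 := by
    rw [abs_of_neg (by linarith)]
    have : -(x - q) < ε / (3 * β) := by linarith
    calc β * -(x - q) < β * (ε / (3 * β)) := by gcongr
      _ = ε / 3 := by field_simp
  obtain ⟨N, hN⟩ := Metric.tendsto_atTop.1 (hh q) (ε / 3) (by positivity)
  refine ⟨N, fun n hn => ?_⟩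
  have a1 := hN n hn
  have a2 := auxF_lip β hβ h n x q
  have a3 : |(∫ t, Real.log (Real.cosh (β * (x + t))) ∂ν)
      - ∫ t, Real.log (Real.cosh (β * (q + t))) ∂ν| ≤ β * |x - q| := by
    rw [← integral_sub (aux_integrable β hβ ν hmom x) (aux_integrable β hβ ν hmom q)]
    have := norm_integral_le_of_norm_le_const (μ := ν)
      (f := fun t => Real.log (Real.cosh (β * (x + t))) - Real.log (Real.cosh (β * (q + t))))
      (C := β * |x - q|) (Eventually.of_forall fun t => by
        rw [Real.norm_eq_abs]; exact aux_lip β hβ x q t)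
    simpa using this
  rw [Real.dist_eq] at a1 ⊢
  rw [abs_lt] at a1 ⊢
  rw [abs_le] at a2 a3
  constructor <;> linarith [a1.1, a1.2, a2.1, a2.2, a3.1, a3.2]

lemma aux_Gn_diff (β : ℝ) (hβ : 0 < β) (h : ℕ → ℝ) (n : ℕ) (x y : ℝ) :
    β / 2 * (x ^ 2 - y ^ 2) - β * |x - y| ≤ Gn β h n x - Gn β h n y := by
  rw [aux_Gn, aux_Gn]
  have := abs_le.1 (auxF_lip β hβ h n x y)
  linarith [this.2]

lemma aux_compact (β : ℝ) (hβ : 0 < β) (ν : Measure ℝ)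
    (m : ℝ) (hpure : ∀ x : ℝ, x ≠ m → G β ν m < G β ν x) (h : ℕ → ℝ)
    (hh : ∀ x : ℝ, Tendsto (fun n => Gn β h n x) atTop (𝓝 (G β ν x)))
    (K : Set ℝ) (hK : IsCompact K) (h0 : (0 : ℝ) ∉ K) :
    ∃ δ > 0, ∀ᶠ n in atTop, ∀ y ∈ K, δ ≤ Gn β h n (m + y) - Gn β h n m := by
  refine hK.induction_on (p := fun s => ∃ δ > 0, ∀ᶠ n in atTop, ∀ y ∈ s,
    δ ≤ Gn β h n (m + y) - Gn β h n m) ?_ ?_ ?_ ?_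
  · exact ⟨1, one_pos, by simp⟩
  · rintro s t hst ⟨δ, hδ, H⟩
    exact ⟨δ, hδ, H.mono fun n hn y hy => hn y (hst hy)⟩
  · rintro s t ⟨δ, hδ, H⟩ ⟨δ', hδ', H'⟩
    refine ⟨min δ δ', lt_min hδ hδ', ?_⟩
    filter_upwards [H, H'] with n hn hn' y hy
    rcases hy with hy | hy
    · exact (min_le_left _ _).trans (hn y hy)
    · exact (min_le_right _ _).trans (hn' y hy)
  · intro z hz
    have hz0 : z ≠ 0 := fun e => h0 (e ▸ hz)
    have hd := hpure (m + z) (by simpa using hz0)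
    set D := G β ν (m + z) - G β ν m with hD
    have hDpos : 0 < D := by linarith
    have hc : ContinuousAt (fun y : ℝ =>
        β / 2 * ((m + y) ^ 2 - (m + z) ^ 2) - β * |(m + y) - (m + z)|) z := by fun_prop
    have hev := hc.eventually (lt_mem_nhds (a := -(D / 4)) (by simp; linarith))
    refine ⟨_, mem_nhdsWithin_of_mem_nhds hev, D / 4, by positivity, ?_⟩
    have ht := ((hh (m + z)).sub (hh m)).eventually (lt_mem_nhds (a := D / 2) (by linarith))
    filter_upwards [ht] with n hn y hy
    have hy' : -(D / 4) < β / 2 * ((m + y) ^ 2 - (m + z) ^ 2) - β * |(m + y) - (m + z)| := hy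
    have := aux_Gn_diff β hβ h n (m + y) (m + z)
    linarith

lemma aux_quad (β : ℝ) (hβ : 0 < β) (ν : Measure ℝ)
    (m : ℝ) (hpure : ∀ x : ℝ, x ≠ m → G β ν m < G β ν x) (h : ℕ → ℝ)
    (hh : ∀ x : ℝ, Tendsto (fun n => Gn β h n x) atTop (𝓝 (G β ν x)))
    (a : ℝ) (ha : 0 < a) :
    ∃ c > 0, ∀ᶠ n in atTop, ∀ y : ℝ, a < |y| → c * y ^ 2 ≤ Gn β h n (m + y) - Gn β h n m := by
  set R := 4 * (|m| + 1) with hR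
  have hRpos : 0 < R := by positivity
  have hK : IsCompact (Metric.closedBall (0 : ℝ) R ∩ {y | a ≤ |y|}) :=
    (isCompact_closedBall _ _).inter_right (isClosed_le continuous_const continuous_abs)
  obtain ⟨δ, hδ, H⟩ := aux_compact β hβ ν m hpure h hh _ hK (by simp [ha])
  refine ⟨min (δ / R ^ 2) (β / 4), by positivity, ?_⟩
  filter_upwards [H] with n hn y hy
  rcases le_or_gt |y| R with hyR | hyR
  · refine le_trans ?_ (hn y ⟨by simpa using hyR, hy.le⟩)
    calc min (δ / R ^ 2) (β / 4) * y ^ 2 ≤ δ / R ^ 2 * R ^ 2 := by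
          have : y ^ 2 ≤ R ^ 2 := by rw [← sq_abs y]; gcongr
          gcongr
          exact min_le_left _ _
      _ = δ := by field_simp
  · have h1 := aux_Gn_diff β hβ h n (m + y) m
    refine le_trans ?_ h1
    have h2 : min (δ / R ^ 2) (β / 4) * y ^ 2 ≤ β / 4 * y ^ 2 := by
      gcongr; exact min_le_right _ _
    refine h2.trans ?_
    rw [show m + y - m = y by ring]
    have h3 : -(|m| * |y|) ≤ m * y := by rw [← abs_mul]; exact neg_abs_le _
    have h4 : R * |y| ≤ y ^ 2 := by
      rw [← sq_abs y, sq]; gcongr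
    have h5 : 0 ≤ y ^ 2 / 4 + m * y - |y| := by
      rw [hR] at h4; nlinarith
    nlinarith [mul_nonneg hβ.le h5]

lemma elog_le_of_le (I L : ℝ) (hI : I ≤ Real.exp L) :
    elog (ENNReal.ofReal I) ≤ (L : EReal) := by
  unfold elog
  split_ifs with h1 h2
  · exact bot_le
  · exact absurd h2 ENNReal.ofReal_ne_top
  · have hpos : 0 < I := by
      by_contra hc
      exact h1 (ENNReal.ofReal_eq_zero.2 (not_lt.1 hc))
    rw [ENNReal.toReal_ofReal hpos.le]
    exact EReal.coe_le_coe_iff.2 ((Real.log_le_iff_le_exp hpos).2 hI)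

lemma aux_int (β : ℝ) (m : ℝ) (h : ℕ → ℝ) (a : ℝ) (ha : 0 < a) (c : ℝ) (hc : 0 < c)
    (α : ℝ) (n : ℕ) (hn : 1 ≤ n)
    (H : ∀ y : ℝ, a < |y| → c * y ^ 2 ≤ Gn β h n (m + y) - Gn β h n m) :
    (∫ s in {s : ℝ | a * (n : ℝ) ^ (1 - α) < |s|},
      Real.exp (-(n : ℝ) * (Gn β h n (m + s * (n : ℝ) ^ (α - 1)) - Gn β h n m)))
      ≤ Real.exp (-((n : ℝ) - 1) * (c * a ^ 2) + Real.log (√(π / c)) + (1 - α) * Real.log n) := by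
  have hn0 : (0 : ℝ) < n := by exact_mod_cast hn
  have hn1 : (1 : ℝ) ≤ n := by exact_mod_cast hn
  set r := (n : ℝ) ^ (α - 1) with hr
  have hrpos : 0 < r := Real.rpow_pos_of_pos hn0 _
  have hrinv : (n : ℝ) ^ (1 - α) = r⁻¹ := by
    rw [hr, ← Real.rpow_neg hn0.le]; congr 1; ring
  rw [hrinv]
  have hb : 0 < c * r ^ 2 := by positivity
  set E := Real.exp (-((n : ℝ) - 1) * (c * a ^ 2)) with hE
  have hgint : Integrable (fun s : ℝ => E * Real.exp (-(c * r ^ 2) * s ^ 2)) :=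
    (integrable_exp_neg_mul_sq hb).const_mul E
  have hmeas : MeasurableSet {s : ℝ | a * r⁻¹ < |s|} :=
    (isOpen_lt continuous_const continuous_abs).measurableSet
  have step1 : (∫ s in {s : ℝ | a * r⁻¹ < |s|},
      Real.exp (-(n : ℝ) * (Gn β h n (m + s * r) - Gn β h n m)))
      ≤ ∫ s in {s : ℝ | a * r⁻¹ < |s|}, E * Real.exp (-(c * r ^ 2) * s ^ 2) := by
    refine integral_mono_of_nonneg (Eventually.of_forall fun s => (Real.exp_pos _).le)
      hgint.integrableOn ?_
    filter_upwards [ae_restrict_mem hmeas] with s hs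
    have hs1 : a < |s * r| := by
      rw [abs_mul, abs_of_pos hrpos]
      have : a * r⁻¹ < |s| := hs
      rwa [← div_eq_mul_inv, div_lt_iff₀ hrpos] at this
    have h1 := H _ hs1
    have h2 : a ^ 2 ≤ (s * r) ^ 2 := by rw [← sq_abs (s * r)]; gcongr
    rw [hE, ← Real.exp_add]
    apply Real.exp_le_exp.2
    have h3 := mul_le_mul_of_nonneg_left h1 hn0.le
    have h4 : ((n : ℝ) - 1) * (c * a ^ 2) ≤ ((n : ℝ) - 1) * (c * (s * r) ^ 2) := by
      have : 0 ≤ (n : ℝ) - 1 := by linarith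
      gcongr
    nlinarith
  refine step1.trans ((setIntegral_le_integral hgint
    (Eventually.of_forall fun s => by positivity)).trans (le_of_eq ?_))
  rw [integral_const_mul, integral_gaussian, Real.exp_add, Real.exp_add, hE, mul_assoc]
  congr 1
  rw [Real.exp_log (by positivity), mul_comm (1 - α), ← Real.rpow_def_of_pos hn0, hrinv,
    show π / (c * r ^ 2) = π / c * (r⁻¹) ^ 2 by field_simp, Real.sqrt_mul (by positivity),
    Real.sqrt_sq (by positivity)]

lemma aux_lim (d K e γ : ℝ) (hd : 0 < d) (hγ : γ < 1) :
    Tendsto (fun n : ℕ => ((n : ℝ) ^ γ)⁻¹ * (-((n : ℝ) - 1) * d + K + e * Real.log n))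
      atTop atBot := by
  have h1 : Tendsto (fun x : ℝ => -(d / 2) * x ^ (1 - γ)) atTop atBot :=
    (tendsto_rpow_atTop (by linarith)).const_mul_atTop_of_neg (by linarith)
  have h2 : ∀ᶠ x : ℝ in atTop, (x ^ γ)⁻¹ * (-(x - 1) * d + K + e * Real.log x)
      ≤ -(d / 2) * x ^ (1 - γ) := by
    have ho := (Real.isLittleO_log_id_atTop.const_mul_left e).bound
      (show (0 : ℝ) < d / 4 by positivity)
    filter_upwards [ho, eventually_ge_atTop (4 * (d + |K|) / d), eventually_gt_atTop 0]
      with x hx1 hx2 hx0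
    simp only [id, Real.norm_eq_abs, abs_of_pos hx0] at hx1
    rw [div_le_iff₀ hd] at hx2
    have hx3 := le_abs_self (e * Real.log x)
    have hK := le_abs_self K
    have hxp : 0 < x ^ γ := Real.rpow_pos_of_pos hx0 _
    rw [Real.rpow_sub hx0, Real.rpow_one]
    calc (x ^ γ)⁻¹ * (-(x - 1) * d + K + e * Real.log x)
        ≤ (x ^ γ)⁻¹ * (-(d / 2) * x) := by
          gcongr
          nlinarith
      _ = _ := by field_simp
  exact (tendsto_atBot_mono' _ h2 h1).comp tendsto_natCast_atTop_atTop

/-- The integral outside the moderate window is super-exponentially small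
(display (6.8) of the paper). -/
theorem integral_outside_window
    (β : ℝ) (hβ : 0 < β) (ν : Measure ℝ) [IsProbabilityMeasure ν]
    (hmom : Integrable (fun x : ℝ => |x|) ν)
    (μ : Measure (ℕ → ℝ)) [IsProbabilityMeasure μ] (hμ : IsProductMeasure ν μ)
    (m : ℝ) (hpure : ∀ x : ℝ, x ≠ m → G β ν m < G β ν x) :
    ∀ᵐ h ∂μ, ∀ k : ℕ, 1 ≤ k →
      ∀ α : ℝ, 1 - 1 / (2 * (2 * (k : ℝ) - 1)) < α → α < 1 →
        ∀ a : ℝ, 0 < a →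
          Tendsto (fun n : ℕ => ((((n : ℝ) ^ (1 - 2 * (k : ℝ) * (1 - α)))⁻¹ : ℝ) : EReal) *
              elog (ENNReal.ofReal
                (∫ s in {s : ℝ | a * (n : ℝ) ^ (1 - α) < |s|},
                  Real.exp (-(n : ℝ) *
                    (Gn β h n (m + s * (n : ℝ) ^ (α - 1)) - Gn β h n m)))))
            atTop (𝓝 ⊥) := by
  filter_upwards [aux_ae β hβ ν hmom μ hμ] with h hh k hk α hα1 hα2 a ha
  obtain ⟨c, hc, H⟩ := aux_quad β hβ ν m hpure h hh a ha
  have hk1 : (1 : ℝ) ≤ k := by exact_mod_cast hk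
  have hγ : 1 - 2 * (k : ℝ) * (1 - α) < 1 := by
    have : 0 < 2 * (k : ℝ) * (1 - α) := by
      have : 0 < 1 - α := by linarith
      positivity
    linarith
  have hlim := aux_lim (c * a ^ 2) (Real.log (√(π / c))) (1 - α) _ (by positivity) hγ
  rw [EReal.tendsto_nhds_bot_iff_real]
  intro x
  filter_upwards [H, eventually_ge_atTop 1, hlim.eventually_lt_atBot x] with n hn hn1 hnx
  have hI := aux_int β m h a ha c hc α n hn1 hn
  refine lt_of_le_of_lt (mul_le_mul_of_nonneg_left (elog_le_of_le _ _ hI) ?_) ?_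
  · exact_mod_cast inv_nonneg.2 (Real.rpow_nonneg (Nat.cast_nonneg n) _)
  · exact_mod_cast hnx
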